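/- Continuum terminated convergence. Let ω be a regular averaging kernel and (hf, hg) ∈ 𝒳² with Φ(hf, hg; u, v) > 0 for all (u, v) ∈ [0,1]² with (u, v) ≠ (0,0). Then for the one-sided termination of the continuum spatially coupled recursion with any measurable initial condition f⁰ : ℝ → [0,1], f^t(x) → 0 as t → ∞ for every x ∈ ℝ. Moreover, if hf(x) > 0 and hg(x) > 0 for all x ∈ (0,1], the same conclusion holds under the weaker hypothesis Φ(hf, hg; u, v) ≥ 0 for all (u, v) ∈ [0,1]². -/

import Mathlib

open MeasureTheory Filter Set

noncomputable section

/-- Convolution `(f ⊗ ω)(x) = ∫ y, f y · ω (x − y)`. -/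
def conv (f ω : ℝ → ℝ) (x : ℝ) : ℝ := ∫ y : ℝ, f y * ω (x - y)

/-- `ω` is an averaging kernel: even, nonnegative, of bounded variation, integrating to 1. -/
def IsAveragingKernel (ω : ℝ → ℝ) : Prop :=
  (∀ x, ω (-x) = ω x) ∧ (∀ x, 0 ≤ ω x) ∧ BoundedVariationOn ω Set.univ ∧
    MeasureTheory.Integrable ω ∧ (∫ x : ℝ, ω x) = 1

/-- The essential supremum `‖ω‖∞` of a kernel, as a real number. -/
def kerSup (ω : ℝ → ℝ) : ℝ := (eLpNorm ω ⊤ MeasureTheory.volume).toReal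

/-- `ω` is regular: for some `W ∈ (0,∞]`, it vanishes outside `[−W, W]` and is
positive on `(−W, W)` (the case `W = ∞` being that `ω` is everywhere positive). -/
def IsRegularKernel (ω : ℝ → ℝ) : Prop :=
  (∀ x, 0 < ω x) ∨
    ∃ W : ℝ, 0 < W ∧ (∀ x, W < |x| → ω x = 0) ∧ (∀ x, |x| < W → 0 < ω x)

/-- Membership in `𝒳`: nondecreasing self-maps of `[0,1]`. -/
def MemX (h : ℝ → ℝ) : Prop :=
  MonotoneOn h (Icc 0 1) ∧ MapsTo h (Icc 0 1) (Icc 0 1)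

/-- Left limit `h(u−)` of `h ∈ 𝒳` at `u ∈ [0,1]`, with the convention `h(0−) = 0`. -/
def lm (h : ℝ → ℝ) (u : ℝ) : ℝ := if u ≤ 0 then 0 else sSup (h '' Ico 0 u)

/-- Right limit `h(u+)` of `h ∈ 𝒳` at `u ∈ [0,1]`, with the convention `h(1+) = 1`. -/
def rm (h : ℝ → ℝ) (u : ℝ) : ℝ := if 1 ≤ u then 1 else sInf (h '' Ioc u 1)

/-- A canonical generalized inverse of `h ∈ 𝒳` (any valid inverse has the same integrals,
so the potential below is unambiguous). -/
def Xinv (h : ℝ → ℝ) (v : ℝ) : ℝ := sInf ({1} ∪ {u ∈ Icc (0:ℝ) 1 | v ≤ h u})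

/-- The potential `Φ(hf, hg; u, v) = ∫₀ᵘ hg⁻¹ + ∫₀ᵛ hf⁻¹ − u·v`. -/
def Pot (hf hg : ℝ → ℝ) (u v : ℝ) : ℝ :=
  (∫ x in (0:ℝ)..u, Xinv hg x) + (∫ x in (0:ℝ)..v, Xinv hf x) - u * v

/-- `A(hf, hg) = Φ(hf, hg; 1, 1)`. -/
def Agap (hf hg : ℝ → ℝ) : ℝ := Pot hf hg 1 1

/-- `(u,v)` is a crossing point of `(hf, hg)`:
`u ∈ [hg(v−), hg(v+)]` and `v ∈ [hf(u−), hf(u+)]`. -/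
def IsCrossing (hf hg : ℝ → ℝ) (u v : ℝ) : Prop :=
  u ∈ Icc (0:ℝ) 1 ∧ v ∈ Icc (0:ℝ) 1 ∧
    u ∈ Icc (lm hg v) (rm hg v) ∧ v ∈ Icc (lm hf u) (rm hf u)

/-- The strictly positive gap condition: there is a nontrivial crossing point, and every
nontrivial crossing point satisfies `Φ(hf, hg; u, v) > max {0, A(hf, hg)}`. -/
def StrictPosGap (hf hg : ℝ → ℝ) : Prop :=
  (∃ u v, IsCrossing hf hg u v ∧ ¬(u = 0 ∧ v = 0) ∧ ¬(u = 1 ∧ v = 1)) ∧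
    ∀ u v, IsCrossing hf hg u v → ¬(u = 0 ∧ v = 0) → ¬(u = 1 ∧ v = 1) →
      max 0 (Agap hf hg) < Pot hf hg u v

/-- Membership in `Ψ`: nondecreasing functions `ℝ → [0,1]`. -/
def MemPsi (f : ℝ → ℝ) : Prop := Monotone f ∧ ∀ x, f x ∈ Icc (0:ℝ) 1

/-- `f` is `(a,b)`-interpolating: limits `a` at `−∞` and `b` at `+∞`. -/
def Interpolates (f : ℝ → ℝ) (a b : ℝ) : Prop :=
  Filter.Tendsto f Filter.atBot (nhds a) ∧ Filter.Tendsto f Filter.atTop (nhds b)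


lemma aux_tele (H : ℝ → ℝ) (hH : Monotone H) (a b δ : ℝ) (hδ : 0 < δ)
    (ha : Tendsto H atBot (nhds a)) (hb : Tendsto H atTop (nhds b)) :
    Integrable (fun x => H x - H (x - δ)) ∧ ∫ x, (H x - H (x - δ)) = δ * (b - a) := by
  have hii : ∀ s t, IntervalIntegrable H volume s t := fun s t => hH.intervalIntegrable
  have hii' : ∀ s t, IntervalIntegrable (fun x => H (x - δ)) volume s t := fun s t =>
    Monotone.intervalIntegrable (fun x y hxy => hH (by linarith))
  have hnn : ∀ x, 0 ≤ H x - H (x - δ) := fun x => sub_nonneg.2 (hH (by linarith))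
  have key : ∀ n : ℝ, ∫ x in (-n)..n, (H x - H (x - δ)) =
      (∫ x in (n-δ)..n, H x) - ∫ x in (-n-δ)..(-n), H x := by
    intro n
    rw [intervalIntegral.integral_sub (hii _ _) (hii' _ _),
      intervalIntegral.integral_comp_sub_right (fun x => H x) δ]
    have h1 := intervalIntegral.integral_add_adjacent_intervals (hii (-n-δ) (-n)) (hii (-n) n)
    have h2 := intervalIntegral.integral_add_adjacent_intervals (hii (-n-δ) (n-δ)) (hii (n-δ) n)
    linarith
  have lim1 : Tendsto (fun n : ℝ => ∫ x in (n-δ)..n, H x) atTop (nhds (δ * b)) := by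
    have hlo : Tendsto (fun n : ℝ => δ * H (n - δ)) atTop (nhds (δ * b)) :=
      (hb.comp (tendsto_atTop_add_const_right _ (-δ) tendsto_id)).const_mul δ
    have hhi : Tendsto (fun n : ℝ => δ * H n) atTop (nhds (δ * b)) := hb.const_mul δ
    refine tendsto_of_tendsto_of_tendsto_of_le_of_le hlo hhi ?_ ?_
    · intro n
      have := intervalIntegral.integral_mono_on (μ := volume) (a := n - δ) (b := n) (f := fun _ => H (n - δ)) (g := H)
        (by linarith) intervalIntegrable_const (hii _ _) (fun x hx => hH hx.1)
      simp at this
      simpa using this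
    · intro n
      have := intervalIntegral.integral_mono_on (μ := volume) (a := n - δ) (b := n) (f := H) (g := fun _ => H n)
        (by linarith) (hii _ _) intervalIntegrable_const (fun x hx => hH hx.2)
      simp at this
      simpa using this
  have lim2 : Tendsto (fun n : ℝ => ∫ x in (-n-δ)..(-n), H x) atTop (nhds (δ * a)) := by
    have hlo : Tendsto (fun n : ℝ => δ * H (-n - δ)) atTop (nhds (δ * a)) :=
      (ha.comp (tendsto_atBot_add_const_right _ (-δ) tendsto_neg_atTop_atBot)).const_mul δ
    have hhi : Tendsto (fun n : ℝ => δ * H (-n)) atTop (nhds (δ * a)) :=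
      (ha.comp tendsto_neg_atTop_atBot).const_mul δ
    refine tendsto_of_tendsto_of_tendsto_of_le_of_le hlo hhi ?_ ?_
    · intro n
      have := intervalIntegral.integral_mono_on (μ := volume) (a := -n - δ) (b := -n) (f := fun _ => H (-n - δ)) (g := H)
        (by linarith) intervalIntegrable_const (hii _ _) (fun x hx => hH hx.1)
      simp at this
      simpa using this
    · intro n
      have := intervalIntegral.integral_mono_on (μ := volume) (a := -n - δ) (b := -n) (f := H) (g := fun _ => H (-n))
        (by linarith) (hii _ _) intervalIntegrable_const (fun x hx => hH hx.2)
      simp at this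
      simpa using this
  have lim : Tendsto (fun n : ℝ => ∫ x in (-n)..n, (H x - H (x - δ))) atTop
      (nhds (δ * (b - a))) := by
    simp_rw [key, mul_sub]
    exact lim1.sub lim2
  have hint : Integrable (fun x => H x - H (x - δ)) := by
    refine integrable_of_intervalIntegral_norm_tendsto (l := atTop) (a := fun n : ℝ => -n)
      (b := fun n : ℝ => n) (δ * (b - a)) ?_ tendsto_neg_atTop_atBot tendsto_id ?_
    · intro n
      have := (hii (-n) n).sub (hii' (-n) n)
      exact this.1
    · simpa only [Real.norm_of_nonneg (hnn _)] using lim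
  exact ⟨hint, tendsto_nhds_unique
    (intervalIntegral_tendsto_integral hint tendsto_neg_atTop_atBot tendsto_id) lim⟩

lemma aux_conv_comm (p ω : ℝ → ℝ) (x : ℝ) : conv p ω x = ∫ y, p (x - y) * ω y := by
  unfold conv
  rw [← integral_sub_left_eq_self (fun y => p y * ω (x - y)) volume x]
  simp

lemma aux_bdd (p q : ℝ → ℝ) (hp : Measurable p) (hp1 : ∀ x, p x ∈ Icc (0:ℝ) 1)
    (hq : Integrable q) : Integrable (fun x => p x * q x) := by
  refine hq.bdd_mul (c := 1) hp.aestronglyMeasurable (Eventually.of_forall fun x => ?_)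
  rw [Real.norm_of_nonneg (hp1 x).1]; exact (hp1 x).2

lemma aux_fubini (p q ω : ℝ → ℝ) (hp : Measurable p) (hp1 : ∀ x, p x ∈ Icc (0:ℝ) 1)
    (hq : Integrable q) (hω : Integrable ω) :
    Integrable (fun x => conv p ω x * q x) ∧
    Integrable (fun y => ω y * ∫ x, p (x - y) * q x) ∧
    ∫ x, conv p ω x * q x = ∫ y, ω y * ∫ x, p (x - y) * q x := by
  have h1 : Integrable (fun z : ℝ × ℝ => p (z.1 - z.2) * (q z.1 * ω z.2))
      (volume.prod volume) := by
    refine (hq.mul_prod hω).bdd_mul (c := 1)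
      (hp.comp (measurable_fst.sub measurable_snd)).aestronglyMeasurable
      (Eventually.of_forall fun x => ?_)
    rw [Real.norm_of_nonneg (hp1 _).1]; exact (hp1 _).2
  have e1 : ∀ x, ∫ y, p (x - y) * (q x * ω y) = conv p ω x * q x := by
    intro x
    rw [aux_conv_comm, ← integral_mul_const]
    congr 1; ext y; ring
  have e2 : ∀ y, ∫ x, p (x - y) * (q x * ω y) = ω y * ∫ x, p (x - y) * q x := by
    intro y
    rw [← integral_const_mul]
    congr 1; ext y; ring
  refine ⟨?_, ?_, ?_⟩
  · simpa only [e1] using h1.integral_prod_left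
  · simpa only [e2] using h1.integral_prod_right
  · have := integral_integral_swap (f := fun x y => p (x - y) * (q x * ω y)) h1
    simpa only [e1, e2] using this

lemma aux_conv_int (p ω : ℝ → ℝ) (hp : Measurable p) (hp1 : ∀ x, p x ∈ Icc (0:ℝ) 1)
    (hω : Integrable ω) (x : ℝ) : Integrable (fun y => p y * ω (x - y)) :=
  aux_bdd p _ hp hp1 (hω.comp_sub_left x)

lemma aux_conv_int' (p ω : ℝ → ℝ) (hp : Measurable p) (hp1 : ∀ x, p x ∈ Icc (0:ℝ) 1)
    (hω : Integrable ω) (x : ℝ) : Integrable (fun y => p (x - y) * ω y) :=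
  aux_bdd (fun y => p (x - y)) _ (by fun_prop) (fun y => hp1 _) hω

lemma aux_lip (ω : ℝ → ℝ) (hω : IsAveragingKernel ω) :
    ∃ C : ℝ, 0 ≤ C ∧ ∀ p : ℝ → ℝ, Measurable p → (∀ x, p x ∈ Icc (0:ℝ) 1) → ∀ δ > 0, ∀ x,
      conv p ω x ≤ conv p ω (x - δ) + C * δ := by
  obtain ⟨-, -, hbv, hint, -⟩ := hω
  have hlb : LocallyBoundedVariationOn ω univ := hbv.locallyBoundedVariationOn
  set V : ℝ → ℝ := variationOnFromTo ω univ 0 with hV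
  have hVm : Monotone V := by
    rw [← monotoneOn_univ]
    exact variationOnFromTo.monotoneOn hlb (mem_univ _)
  have hVb : ∀ x, |V x| ≤ (eVariationOn ω univ).toReal := by
    intro x
    have hle : ∀ s t : ℝ, (eVariationOn ω (univ ∩ Icc s t)).toReal ≤ (eVariationOn ω univ).toReal :=
      fun s t => ENNReal.toReal_mono hbv (eVariationOn.mono _ inter_subset_left)
    simp only [hV, variationOnFromTo]
    split_ifs
    · rw [abs_of_nonneg ENNReal.toReal_nonneg]; exact hle _ _
    · rw [abs_neg, abs_of_nonneg ENNReal.toReal_nonneg]; exact hle _ _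
  have hbT := tendsto_atTop_ciSup hVm ⟨_, by rintro _ ⟨x, rfl⟩; exact (abs_le.1 (hVb x)).2⟩
  have hbB := tendsto_atBot_ciInf hVm ⟨_, by rintro _ ⟨x, rfl⟩; exact (abs_le.1 (hVb x)).1⟩
  have hle : ∀ x δ, 0 < δ → ω x - ω (x - δ) ≤ V x - V (x - δ) := by
    intro x δ hδ
    have := variationOnFromTo.sub_self_monotoneOn hlb (mem_univ 0) (mem_univ (x - δ)) (mem_univ x)
      (by linarith)
    simp only [Pi.sub_apply] at this
    change V (x - δ) - ω (x - δ) ≤ V x - ω x at this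
    linarith
  refine ⟨(⨆ i, V i) - ⨅ i, V i, ?_, ?_⟩
  · have h1 : V 0 ≤ ⨆ i, V i := hVm.ge_of_tendsto hbT 0
    have h2 : ⨅ i, V i ≤ V 0 := hVm.le_of_tendsto hbB 0
    linarith
  intro p hp hp1 δ hδ x
  obtain ⟨hi, he⟩ := aux_tele V hVm _ _ δ hδ hbB hbT
  have hi' : Integrable (fun y => V (x - y) - V (x - y - δ)) := hi.comp_sub_left x
  have he' : ∫ y, (V (x - y) - V (x - y - δ)) = δ * ((⨆ i, V i) - ⨅ i, V i) := by
    rw [← he]; exact integral_sub_left_eq_self (fun y => V y - V (y - δ)) volume x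
  have h1 := aux_conv_int p ω hp hp1 hint x
  have h2 := aux_conv_int p ω hp hp1 hint (x - δ)
  have : ∫ y, (p y * ω (x - y) - p y * ω (x - δ - y)) ≤ ∫ y, (V (x - y) - V (x - y - δ)) := by
    refine integral_mono (h1.sub h2) hi' fun y => ?_
    have hy := hle (x - y) δ hδ
    have e : x - δ - y = x - y - δ := by ring
    have hm : V (x - y - δ) ≤ V (x - y) := hVm (by linarith)
    simp only [e]
    have := hp1 y
    nlinarith [this.1, this.2]
  rw [integral_sub h1 h2, he'] at this
  unfold conv
  linarith

lemma aux_Xinv_bdd (h : ℝ → ℝ) (v : ℝ) :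
    BddBelow ({1} ∪ {u ∈ Icc (0:ℝ) 1 | v ≤ h u}) := by
  refine ⟨0, ?_⟩
  rintro x (rfl | hx)
  · exact zero_le_one
  · exact hx.1.1

lemma aux_Xinv_nonneg (h : ℝ → ℝ) (v : ℝ) : 0 ≤ Xinv h v := by
  refine le_csInf ⟨1, Or.inl rfl⟩ ?_
  rintro x (rfl | hx)
  · exact zero_le_one
  · exact hx.1.1

lemma aux_Xinv_le_one (h : ℝ → ℝ) (v : ℝ) : Xinv h v ≤ 1 :=
  csInf_le (aux_Xinv_bdd h v) (Or.inl rfl)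

lemma aux_Xinv_mono (h : ℝ → ℝ) : Monotone (Xinv h) := by
  intro a b hab
  refine csInf_le_csInf (aux_Xinv_bdd h a) ⟨1, Or.inl rfl⟩ ?_
  rintro x (rfl | hx)
  · exact Or.inl rfl
  · exact Or.inr ⟨hx.1, hab.trans hx.2⟩

lemma aux_Xinv_le (h : ℝ → ℝ) (v w : ℝ) (hw : 0 ≤ w)
    (hv : ∀ s, w < s → s ≤ 1 → v ≤ h s) : Xinv h v ≤ w := by
  refine le_of_forall_gt_imp_ge_of_dense fun s hs => ?_
  by_cases h1 : s ≤ 1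
  · exact csInf_le (aux_Xinv_bdd h v) (Or.inr ⟨⟨by linarith, h1⟩, hv s hs h1⟩)
  · exact (aux_Xinv_le_one h v).trans (by linarith)

def primX (h : ℝ → ℝ) (v : ℝ) : ℝ := ∫ x in (0:ℝ)..v, Xinv h x

lemma aux_prim_cont (h : ℝ → ℝ) : Continuous (primX h) :=
  intervalIntegral.continuous_primitive (fun _ _ => (aux_Xinv_mono h).intervalIntegrable) 0

lemma aux_prim_sub (h : ℝ → ℝ) (a b : ℝ) : primX h b - primX h a = ∫ x in a..b, Xinv h x :=
  intervalIntegral.integral_interval_sub_left (aux_Xinv_mono h).intervalIntegrable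
    (aux_Xinv_mono h).intervalIntegrable

lemma aux_prim_mono (h : ℝ → ℝ) : Monotone (primX h) := by
  intro a b hab
  have := aux_prim_sub h a b
  have := intervalIntegral.integral_nonneg (μ := volume) hab (fun x _ => aux_Xinv_nonneg h x)
  linarith

lemma aux_prim_zero (h : ℝ → ℝ) : primX h 0 = 0 := by simp [primX]

/-- subgradient inequality -/
lemma aux_prim_le (h : ℝ → ℝ) (v v' w : ℝ) (hvv : v' ≤ v) (hw : 0 ≤ w)
    (hv : ∀ s, w < s → s ≤ 1 → v ≤ h s) : primX h v - primX h v' ≤ w * (v - v') := by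
  rw [aux_prim_sub]
  have := intervalIntegral.integral_mono_on (μ := volume) (f := Xinv h) (g := fun _ => w) hvv
    (aux_Xinv_mono h).intervalIntegrable intervalIntegrable_const
    (fun x hx => aux_Xinv_le h x w hw fun s h1 h2 => hx.2.trans (hv s h1 h2))
  simp at this
  linarith

lemma aux_conv_nonneg (p ω : ℝ → ℝ) (hω : IsAveragingKernel ω) (hp : ∀ x, 0 ≤ p x) (x : ℝ) :
    0 ≤ conv p ω x :=
  integral_nonneg fun y => mul_nonneg (hp y) (hω.2.1 _)

lemma aux_conv_mono (p q ω : ℝ → ℝ) (hω : IsAveragingKernel ω) (hp : ∀ x, 0 ≤ p x)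
    (hpq : ∀ x, p x ≤ q x) (hq : Measurable q) (hq1 : ∀ x, q x ∈ Icc (0:ℝ) 1) (x : ℝ) :
    conv p ω x ≤ conv q ω x := by
  refine integral_mono_of_nonneg (Eventually.of_forall fun y => mul_nonneg (hp y) (hω.2.1 _))
    (aux_conv_int q ω hq hq1 hω.2.2.2.1 x)
    (Eventually.of_forall fun y => mul_le_mul_of_nonneg_right (hpq y) (hω.2.1 _))

lemma aux_conv_one (ω : ℝ → ℝ) (hω : IsAveragingKernel ω) (x : ℝ) :
    conv (fun _ => 1) ω x = 1 := by
  rw [aux_conv_comm]; simpa using hω.2.2.2.2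

lemma aux_conv_mem (p ω : ℝ → ℝ) (hω : IsAveragingKernel ω) (hp : ∀ x, p x ∈ Icc (0:ℝ) 1)
    (x : ℝ) : conv p ω x ∈ Icc (0:ℝ) 1 := by
  refine ⟨aux_conv_nonneg p ω hω (fun x => (hp x).1) x, ?_⟩
  rw [← aux_conv_one ω hω x]
  exact aux_conv_mono p _ ω hω (fun x => (hp x).1) (fun x => (hp x).2) measurable_const
    (fun _ => ⟨zero_le_one, le_rfl⟩) x

lemma aux_conv_monotone (p ω : ℝ → ℝ) (hω : IsAveragingKernel ω) (hp : ∀ x, p x ∈ Icc (0:ℝ) 1)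
    (hm : Monotone p) : Monotone (conv p ω) := by
  intro x z hxz
  rw [aux_conv_comm, aux_conv_comm]
  refine integral_mono (aux_conv_int' p ω hm.measurable hp hω.2.2.2.1 x)
    (aux_conv_int' p ω hm.measurable hp hω.2.2.2.1 z) fun y =>
    mul_le_mul_of_nonneg_right (hm (by linarith)) (hω.2.1 _)

/-- convergence of convolutions -/
lemma aux_conv_tendsto (p : ℕ → ℝ → ℝ) (q ω : ℝ → ℝ) (hω : IsAveragingKernel ω)
    (hp : ∀ n, Measurable (p n)) (hp1 : ∀ n x, p n x ∈ Icc (0:ℝ) 1)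
    (hl : ∀ x, Tendsto (fun n => p n x) atTop (nhds (q x))) (x : ℝ) :
    Tendsto (fun n => conv (p n) ω x) atTop (nhds (conv q ω x)) := by
  refine tendsto_integral_of_dominated_convergence (fun y => ω (x - y)) ?_ 
    (hω.2.2.2.1.comp_sub_left x) ?_ ?_
  · intro n; exact (aux_conv_int _ ω (hp n) (hp1 n) hω.2.2.2.1 x).aestronglyMeasurable
  · intro n; refine Eventually.of_forall fun y => ?_
    rw [Real.norm_of_nonneg (mul_nonneg (hp1 n y).1 (hω.2.1 _))]
    exact mul_le_of_le_one_left (hω.2.1 _) (hp1 n y).2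
  · exact Eventually.of_forall fun y => (hl y).mul_const _

lemma aux_conv_atBot (p ω : ℝ → ℝ) (hω : IsAveragingKernel ω) (hp : Measurable p)
    (hp1 : ∀ x, p x ∈ Icc (0:ℝ) 1) (hl : Tendsto p atBot (nhds 0)) :
    Tendsto (conv p ω) atBot (nhds 0) := by
  have : Tendsto (fun x => ∫ y, p (x - y) * ω y) atBot (nhds (∫ y, (0:ℝ) * ω y)) := by
    refine tendsto_integral_filter_of_dominated_convergence (fun y => ω y) ?_ ?_ hω.2.2.2.1 ?_
    · exact Eventually.of_forall fun x =>
        (aux_conv_int' p ω hp hp1 hω.2.2.2.1 x).aestronglyMeasurable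
    · refine Eventually.of_forall fun x => Eventually.of_forall fun y => ?_
      rw [Real.norm_of_nonneg (mul_nonneg (hp1 _).1 (hω.2.1 _))]
      exact mul_le_of_le_one_left (hω.2.1 _) (hp1 _).2
    · exact Eventually.of_forall fun y =>
        (hl.comp (tendsto_atBot_add_const_right _ (-y) tendsto_id)).mul_const _
  simp only [zero_mul, integral_zero] at this
  exact this.congr fun x => (aux_conv_comm p ω x).symm

lemma aux_sym (F G ω : ℝ → ℝ) (hω : IsAveragingKernel ω) (hF : Monotone F) (hG : Monotone G)
    (hF1 : ∀ x, F x ∈ Icc (0:ℝ) 1) (hG1 : ∀ x, G x ∈ Icc (0:ℝ) 1)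
    (hF0 : ∀ x, x < 0 → F x = 0) (φ γ γ₀ δ : ℝ) (hδ : 0 < δ)
    (hFl : Tendsto F atTop (nhds φ)) (hGl : Tendsto G atTop (nhds γ))
    (hGb : Tendsto G atBot (nhds γ₀)) :
    Integrable (fun x => conv G ω (x - δ) * (F x - F (x - δ))) ∧
    Integrable (fun x => conv F ω x * (G x - G (x - δ))) ∧
    (∫ x, conv G ω (x - δ) * (F x - F (x - δ))) + ∫ x, conv F ω x * (G x - G (x - δ)) =
      δ * (φ * γ) := by
  have hFb : Tendsto F atBot (nhds 0) :=
    tendsto_const_nhds.congr' ((eventually_lt_atBot 0).mono fun x hx => (hF0 x hx).symm)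
  have hFi := (aux_tele F hF _ _ δ hδ hFb hFl).1
  have hGi := (aux_tele G hG _ _ δ hδ hGb hGl).1
  have e0 : ∀ x, conv G ω (x - δ) = conv (fun z => G (z - δ)) ω x := by
    intro x; rw [aux_conv_comm, aux_conv_comm]; congr 1; ext y; ring_nf
  obtain ⟨a1, a2, a3⟩ := aux_fubini (fun z => G (z - δ)) (fun x => F x - F (x - δ)) ω
    (hG.measurable.comp (measurable_id.sub_const δ)) (fun x => hG1 _) hFi hω.2.2.2.1
  obtain ⟨b1, b2, b3⟩ := aux_fubini F (fun x => G x - G (x - δ)) ω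
    hF.measurable hF1 hGi hω.2.2.2.1
  refine ⟨by simpa only [e0] using a1, b1, ?_⟩
  simp only [e0]
  rw [a3, b3, ← integral_neg_eq_self (fun y => ω y * ∫ x, F (x - y) * (G x - G (x - δ)))]
  rw [← integral_add a2 b2.comp_neg]
  have : ∀ y, (ω y * ∫ x, G (x - y - δ) * (F x - F (x - δ))) +
      ω (-y) * ∫ x, F (x - -y) * (G x - G (x - δ)) = ω y * (δ * (φ * γ)) := by
    intro y
    rw [hω.1, ← mul_add]
    congr 1
    have hGy : Integrable (fun x => G (x - y) - G (x - y - δ)) := hGi.comp_sub_right y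
    have e1 : ∫ x, F (x - -y) * (G x - G (x - δ)) =
        ∫ x, F x * (G (x - y) - G (x - y - δ)) := by
      rw [← integral_sub_right_eq_self (fun x => F (x - -y) * (G x - G (x - δ))) y]
      simp
    rw [e1, ← integral_add
      (aux_bdd (fun x => G (x - y - δ)) _
        (hG.measurable.comp ((measurable_id.sub_const y).sub_const δ)) (fun x => hG1 _) hFi)
      (aux_bdd F _ hF.measurable hF1 hGy)]
    have hm : Monotone (fun x => F x * G (x - y)) := fun s t hst =>
      mul_le_mul (hF hst) (hG (by linarith)) (hG1 _).1 (hF1 _).1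
    have := (aux_tele (fun x => F x * G (x - y)) hm 0 (φ * γ) δ hδ
      (tendsto_const_nhds.congr' ((eventually_lt_atBot 0).mono fun x hx => by simp [hF0 x hx]))
      (hFl.mul (hGl.comp (tendsto_atTop_add_const_right _ (-y) tendsto_id)))).2
    rw [sub_zero] at this
    rw [← this]
    congr 1; ext x
    have e : x - δ - y = x - y - δ := by ring
    rw [e]; ring
  simp only [this]
  rw [integral_mul_const, hω.2.2.2.2, one_mul]

lemma aux_main (F G ω hf hg : ℝ → ℝ) (hω : IsAveragingKernel ω) (hF : Monotone F)
    (hG : Monotone G)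
    (hF1 : ∀ x, F x ∈ Icc (0:ℝ) 1) (hG1 : ∀ x, G x ∈ Icc (0:ℝ) 1)
    (hF0 : ∀ x, x < 0 → F x = 0) (φ γ : ℝ)
    (hFl : Tendsto F atTop (nhds φ)) (hGl : Tendsto G atTop (nhds γ))
    (hFs : ∀ x, 0 ≤ x → ∀ s, conv G ω x < s → s ≤ 1 → F x ≤ hf s)
    (hGs : ∀ x s, conv F ω x < s → s ≤ 1 → G x ≤ hg s)
    (c : ℝ) (hc : ∀ x, 0 ≤ x → primX hf (F x) ≤ conv G ω x * F x - c) :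
    Pot hf hg γ φ ≤ -c := by
  obtain ⟨C, hC, hlip⟩ := aux_lip ω hω
  have hFb : Tendsto F atBot (nhds 0) :=
    tendsto_const_nhds.congr' ((eventually_lt_atBot 0).mono fun x hx => (hF0 x hx).symm)
  have hGb := tendsto_atBot_ciInf hG ⟨0, by rintro _ ⟨x, rfl⟩; exact (hG1 x).1⟩
  set γ₀ := ⨅ i, G i
  have hK := aux_conv_nonneg G ω hω (fun x => (hG1 x).1)
  have hL := aux_conv_nonneg F ω hω (fun x => (hF1 x).1)
  have hQ0 : primX hg γ₀ ≤ 0 := by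
    refine le_of_tendsto_of_tendsto (((aux_prim_cont hg).tendsto γ₀).comp hGb)
      (aux_conv_atBot F ω hω hF.measurable hF1 hFb) (Eventually.of_forall fun x => ?_)
    have := aux_prim_le hg (G x) 0 (conv F ω x) (hG1 x).1 (hL x) (hGs x)
    rw [aux_prim_zero] at this
    simp only [Function.comp]
    nlinarith [hL x, (hG1 x).1, (hG1 x).2]
  have key : ∀ δ > 0, Pot hf hg γ φ + c ≤ C * φ * δ := by
    intro δ hδ
    obtain ⟨p1, p2⟩ := aux_tele (fun x => primX hf (F x)) ((aux_prim_mono hf).comp hF)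
      (primX hf 0) (primX hf φ) δ hδ (((aux_prim_cont hf).tendsto 0).comp hFb)
      (((aux_prim_cont hf).tendsto φ).comp hFl)
    obtain ⟨q1, q2⟩ := aux_tele (fun x => primX hg (G x)) ((aux_prim_mono hg).comp hG)
      (primX hg γ₀) (primX hg γ) δ hδ (((aux_prim_cont hg).tendsto γ₀).comp hGb)
      (((aux_prim_cont hg).tendsto γ).comp hGl)
    obtain ⟨f1, f2⟩ := aux_tele F hF _ _ δ hδ hFb hFl
    obtain ⟨s1, s2, s3⟩ := aux_sym F G ω hω hF hG hF1 hG1 hF0 φ γ γ₀ δ hδ hFl hGl hGb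
    have hi : Integrable ((Ico 0 δ).indicator (fun _ : ℝ => c)) :=
      (integrable_indicator_iff measurableSet_Ico).2 (integrableOn_const (by simp))
    have hie : ∫ x, (Ico 0 δ).indicator (fun _ : ℝ => c) x = δ * c := by
      rw [integral_indicator measurableSet_Ico]; simp [hδ.le]
    have hmono : ∫ x, ((primX hf (F x) - primX hf (F (x - δ))) +
        (primX hg (G x) - primX hg (G (x - δ))) + (Ico 0 δ).indicator (fun _ : ℝ => c) x) ≤
        ∫ x, (conv G ω (x - δ) * (F x - F (x - δ)) + conv F ω x * (G x - G (x - δ)) +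
          (C * δ) * (F x - F (x - δ))) := by
      refine integral_mono ((p1.add q1).add hi) ((s1.add s2).add (f1.const_mul _)) fun x => ?_
      have hFx : F (x - δ) ≤ F x := hF (by linarith)
      have hGx : G (x - δ) ≤ G x := hG (by linarith)
      have h1 := aux_prim_le hg (G x) (G (x - δ)) _ hGx (hL x) (hGs x)
      have h2 : (primX hf (F x) - primX hf (F (x - δ))) + (Ico 0 δ).indicator (fun _ : ℝ => c) x
          ≤ conv G ω x * (F x - F (x - δ)) := by
        by_cases hx : x ∈ Ico 0 δ
        · rw [indicator_of_mem hx, hF0 (x - δ) (by linarith [hx.2]), aux_prim_zero]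
          linarith [hc x hx.1]
        · rw [indicator_of_notMem hx]
          rcases lt_or_ge x 0 with h0 | h0
          · rw [hF0 x h0, hF0 (x - δ) (by linarith)]; simp
          · linarith [aux_prim_le hf (F x) (F (x - δ)) _ hFx (hK x) (hFs x h0)]
      have h3 := mul_le_mul_of_nonneg_right (hlip G hG.measurable hG1 δ hδ x) (sub_nonneg.2 hFx)
      simp only
      linarith
    have s12 : Integrable (fun x => conv G ω (x - δ) * (F x - F (x - δ)) +
      conv F ω x * (G x - G (x - δ))) := s1.add s2
    have pq : Integrable (fun x => (primX hf (F x) - primX hf (F (x - δ))) +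
        (primX hg (G x) - primX hg (G (x - δ)))) := p1.add q1
    rw [integral_add s12 (f1.const_mul _), integral_add s1 s2, s3, integral_const_mul, f2,
      integral_add pq hi, integral_add p1 q1, p2, q2, hie, aux_prim_zero] at hmono
    have e : Pot hf hg γ φ = primX hg γ + primX hf φ - γ * φ := rfl
    rw [e]
    have : δ * (primX hg γ + primX hf φ - γ * φ + c) ≤ δ * (C * φ * δ) := by
      nlinarith [mul_nonneg hδ.le (neg_nonneg.2 hQ0)]
    exact le_of_mul_le_mul_left this hδ
  have ht : Tendsto (fun δ : ℝ => C * φ * δ) (nhdsWithin 0 (Ioi 0)) (nhds 0) := by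
    have : Tendsto (fun δ : ℝ => C * φ * δ) (nhds 0) (nhds (C * φ * 0)) :=
      (continuous_const.mul continuous_id).tendsto 0
    rw [mul_zero] at this
    exact this.mono_left nhdsWithin_le_nhds
  have := ge_of_tendsto ht (eventually_nhdsWithin_of_forall fun δ hδ => key δ hδ)
  linarith

lemma aux_zero (H ω : ℝ → ℝ) (hω : IsAveragingKernel ω) (W : ℝ) (hW : 0 < W)
    (hpos : ∀ x, |x| < W → 0 < ω x) (hm : Monotone H) (hH : ∀ x, H x ∈ Icc (0:ℝ) 1) (x : ℝ)
    (hx : conv H ω x = 0) : ∀ y, y < x + W → H y = 0 := by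
  intro y hy
  by_contra hne
  have hyp : 0 < H y := lt_of_le_of_ne (hH y).1 (Ne.symm hne)
  have h0 := (integral_eq_zero_iff_of_nonneg
    (fun z => mul_nonneg (hH z).1 (hω.2.1 (x - z)))
    (aux_conv_int H ω hm.measurable hH hω.2.2.2.1 x)).1 hx
  have hsub : Ioo (max y (x - W)) (x + W) ⊆ {z | ¬ (H z * ω (x - z) = 0)} := by
    intro z hz
    have h1 : y < z := (le_max_left _ _).trans_lt hz.1
    have h2 : x - W < z := (le_max_right _ _).trans_lt hz.1
    have h3 := hz.2
    exact (mul_pos (hyp.trans_le (hm h1.le))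
      (hpos _ (abs_lt.2 ⟨by linarith, by linarith⟩))).ne'
  have h1 : volume (Ioo (max y (x - W)) (x + W)) = 0 := measure_mono_null hsub h0
  rw [Real.volume_Ioo, ENNReal.ofReal_eq_zero] at h1
  have : max y (x - W) < x + W := max_lt hy (by linarith)
  linarith

def majF (ω hf hg : ℝ → ℝ) : ℕ → ℝ → ℝ
  | 0 => fun _ => 1
  | t + 1 => fun x => if x < 0 then 0 else
      hf (conv (fun y => hg (conv (majF ω hf hg t) ω y)) ω x)

lemma aux_majF (ω hf hg : ℝ → ℝ) (hω : IsAveragingKernel ω) (hhf : MemX hf) (hhg : MemX hg)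
    (t : ℕ) : Monotone (majF ω hf hg t) ∧ (∀ x, majF ω hf hg t x ∈ Icc (0:ℝ) 1) ∧
      Monotone (fun y => hg (conv (majF ω hf hg t) ω y)) ∧
      (∀ y, hg (conv (majF ω hf hg t) ω y) ∈ Icc (0:ℝ) 1) := by
  have step : ∀ F : ℝ → ℝ, Monotone F → (∀ x, F x ∈ Icc (0:ℝ) 1) →
      Monotone (fun y => hg (conv F ω y)) ∧ (∀ y, hg (conv F ω y) ∈ Icc (0:ℝ) 1) := by
    intro F hF hF1
    exact ⟨fun x y hxy => hhg.1 (aux_conv_mem F ω hω hF1 x) (aux_conv_mem F ω hω hF1 y)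
      (aux_conv_monotone F ω hω hF1 hF hxy), fun y => hhg.2 (aux_conv_mem F ω hω hF1 y)⟩
  suffices h : Monotone (majF ω hf hg t) ∧ (∀ x, majF ω hf hg t x ∈ Icc (0:ℝ) 1) from
    ⟨h.1, h.2, step _ h.1 h.2⟩
  induction t with
  | zero => exact ⟨fun x y _ => le_rfl, fun x => ⟨zero_le_one, le_rfl⟩⟩
  | succ t ih =>
    obtain ⟨hg1, hg2⟩ := step _ ih.1 ih.2
    have hm := aux_conv_mem _ ω hω hg2
    refine ⟨fun x y hxy => ?_, fun x => ?_⟩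
    · simp only [majF]
      split_ifs with h1 h2 h2
      · exact le_rfl
      · exact (hhf.2 (hm y)).1
      · linarith
      · exact hhf.1 (hm x) (hm y) (aux_conv_monotone _ ω hω hg2 hg1 hxy)
    · simp only [majF]
      split_ifs
      · exact ⟨le_rfl, zero_le_one⟩
      · exact hhf.2 (hm x)

/-- one-step comparison -/
lemma aux_cmp (ω hf hg : ℝ → ℝ) (hω : IsAveragingKernel ω) (hhf : MemX hf) (hhg : MemX hg)
    (p : ℝ → ℝ) (t : ℕ) (hp : ∀ x, p x ∈ Icc (0:ℝ) 1) (hpt : ∀ x, p x ≤ majF ω hf hg t x) :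
    (∀ x, hg (conv p ω x) ∈ Icc (0:ℝ) 1) ∧
    (∀ x, hg (conv p ω x) ≤ hg (conv (majF ω hf hg t) ω x)) ∧
    (∀ x, (if x < 0 then 0 else hf (conv (fun y => hg (conv p ω y)) ω x)) ∈ Icc (0:ℝ) 1) ∧
    (∀ x, (if x < 0 then 0 else hf (conv (fun y => hg (conv p ω y)) ω x)) ≤
      majF ω hf hg (t + 1) x) := by
  obtain ⟨a1, a2, a3, a4⟩ := aux_majF ω hf hg hω hhf hhg t
  have b1 : ∀ x, hg (conv p ω x) ∈ Icc (0:ℝ) 1 := fun x => hhg.2 (aux_conv_mem p ω hω hp x)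
  have b2 : ∀ x, hg (conv p ω x) ≤ hg (conv (majF ω hf hg t) ω x) := fun x =>
    hhg.1 (aux_conv_mem p ω hω hp x) (aux_conv_mem _ ω hω a2 x)
      (aux_conv_mono p _ ω hω (fun x => (hp x).1) hpt a1.measurable a2 x)
  refine ⟨b1, b2, fun x => ?_, fun x => ?_⟩
  · split_ifs
    · exact ⟨le_rfl, zero_le_one⟩
    · exact hhf.2 (aux_conv_mem _ ω hω b1 x)
  · simp only [majF]
    split_ifs
    · exact le_rfl
    · exact hhf.1 (aux_conv_mem _ ω hω b1 x) (aux_conv_mem _ ω hω a4 x)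
        (aux_conv_mono _ _ ω hω (fun x => (b1 x).1) b2 a3.measurable a4 x)

/-- right limit at zero vanishes -/
lemma aux_rlim (hf hg : ℝ → ℝ) (a : ℝ) (ha : 0 < a) (hhg : MemX hg) (ha1 : a ≤ 1)
    (hgp : ∀ x ∈ Ioc (0:ℝ) 1, 0 < hg x)
    (hP : ∀ u ∈ Icc (0:ℝ) 1, ∀ v ∈ Icc (0:ℝ) 1, 0 ≤ Pot hf hg u v)
    (h : ∀ s, 0 < s → s ≤ 1 → a ≤ hf s) : False := by
  have h1 := aux_prim_le hf a 0 0 ha.le le_rfl h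
  have hs : a / 2 ∈ Icc (0:ℝ) 1 := ⟨by linarith, by linarith⟩
  have hu := hgp (a / 2) ⟨by linarith, by linarith⟩
  have hu1 := hhg.2 hs
  have h2 := aux_prim_le hg (hg (a/2)) 0 (a/2) hu.le hs.1
    (fun s h1 h2 => hhg.1 hs ⟨by linarith, h2⟩ h1.le)
  have h3 : 0 ≤ primX hg (hg (a/2)) + primX hf a - hg (a/2) * a :=
    hP (hg (a/2)) hu1 a ⟨ha.le, ha1⟩
  rw [aux_prim_zero] at h1 h2
  nlinarith [mul_pos hu ha]

/-- **Continuum terminated convergence.** -/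
theorem continuum_terminated_convergence
    (ω hf hg : ℝ → ℝ)
    (hω : IsAveragingKernel ω) (hreg : IsRegularKernel ω)
    (hhf : MemX hf) (hhg : MemX hg)
    (f g : ℕ → ℝ → ℝ)
    (hmeas : Measurable (f 0)) (hrange : ∀ x, f 0 x ∈ Icc (0:ℝ) 1)
    (hrecg : ∀ t x, g t x = hg (conv (f t) ω x))
    (hrecf : ∀ t x, f (t + 1) x = if x < 0 then 0 else hf (conv (g t) ω x)) :
    ((∀ u ∈ Icc (0:ℝ) 1, ∀ v ∈ Icc (0:ℝ) 1, ¬(u = 0 ∧ v = 0) →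
        0 < Pot hf hg u v) →
      ∀ x, Filter.Tendsto (fun t => f t x) Filter.atTop (nhds 0)) ∧
    (((∀ x ∈ Ioc (0:ℝ) 1, 0 < hf x ∧ 0 < hg x) ∧
        (∀ u ∈ Icc (0:ℝ) 1, ∀ v ∈ Icc (0:ℝ) 1, 0 ≤ Pot hf hg u v)) →
      ∀ x, Filter.Tendsto (fun t => f t x) Filter.atTop (nhds 0)) := by
  set M := majF ω hf hg with hM
  set N : ℕ → ℝ → ℝ := fun t y => hg (conv (M t) ω y) with hN
  have hmaj := aux_majF ω hf hg hω hhf hhg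
  -- comparison with f
  have hfM : ∀ t, (∀ x, f t x ∈ Icc (0:ℝ) 1) ∧ ∀ x, f t x ≤ M t x := by
    intro t
    induction t with
    | zero => exact ⟨hrange, fun x => (hrange x).2⟩
    | succ t ih =>
      obtain ⟨-, -, c3, c4⟩ := aux_cmp ω hf hg hω hhf hhg (f t) t ih.1 ih.2
      have e : g t = fun y => hg (conv (f t) ω y) := funext (hrecg t)
      have e2 : f (t+1) = fun x => if x < 0 then 0 else
          hf (conv (fun y => hg (conv (f t) ω y)) ω x) := by
        rw [← e]; exact funext (hrecf t)
      rw [e2]; exact ⟨c3, c4⟩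
  -- monotonicity in t
  have hMdec : ∀ t x, M (t+1) x ≤ M t x := by
    intro t
    induction t with
    | zero => exact fun x => ((hmaj 1).2.1 x).2
    | succ t ih =>
      exact (aux_cmp ω hf hg hω hhf hhg (M (t+1)) t (hmaj (t+1)).2.1 ih).2.2.2
  have hNdec : ∀ t x, N (t+1) x ≤ N t x := fun t =>
    (aux_cmp ω hf hg hω hhf hhg (M (t+1)) t (hmaj (t+1)).2.1 (hMdec t)).2.1
  have hMa : ∀ x, Antitone (fun t => M t x) := fun x => antitone_nat_of_succ_le fun t => hMdec t x
  have hNa : ∀ x, Antitone (fun t => N t x) := fun x => antitone_nat_of_succ_le fun t => hNdec t x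
  obtain ⟨F, hFdef⟩ : ∃ F : ℝ → ℝ, ∀ x, Tendsto (fun t => M t x) atTop (nhds (F x)) :=
    ⟨fun x => ⨅ t, M t x, fun x => tendsto_atTop_ciInf (hMa x)
      ⟨0, by rintro _ ⟨t, rfl⟩; exact ((hmaj t).2.1 x).1⟩⟩
  obtain ⟨G, hGdef⟩ : ∃ G : ℝ → ℝ, ∀ x, Tendsto (fun t => N t x) atTop (nhds (G x)) :=
    ⟨fun x => ⨅ t, N t x, fun x => tendsto_atTop_ciInf (hNa x)
      ⟨0, by rintro _ ⟨t, rfl⟩; exact ((hmaj t).2.2.2 x).1⟩⟩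
  have hFm : Monotone F := fun x y hxy =>
    le_of_tendsto_of_tendsto' (hFdef x) (hFdef y) fun t => (hmaj t).1 hxy
  have hGm : Monotone G := fun x y hxy =>
    le_of_tendsto_of_tendsto' (hGdef x) (hGdef y) fun t => (hmaj t).2.2.1 hxy
  have hF1 : ∀ x, F x ∈ Icc (0:ℝ) 1 := fun x =>
    isClosed_Icc.mem_of_tendsto (hFdef x) (Eventually.of_forall fun t => (hmaj t).2.1 x)
  have hG1 : ∀ x, G x ∈ Icc (0:ℝ) 1 := fun x =>
    isClosed_Icc.mem_of_tendsto (hGdef x) (Eventually.of_forall fun t => (hmaj t).2.2.2 x)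
  have hFM : ∀ t x, F x ≤ M t x := fun t x => (hMa x).le_of_tendsto (hFdef x) t
  have hGN : ∀ t x, G x ≤ N t x := fun t x => (hNa x).le_of_tendsto (hGdef x) t
  have hLt := aux_conv_tendsto M F ω hω (fun t => (hmaj t).1.measurable) (fun t => (hmaj t).2.1) hFdef
  have hKt := aux_conv_tendsto N G ω hω (fun t => (hmaj t).2.2.1.measurable)
    (fun t => (hmaj t).2.2.2) hGdef
  have hMs : ∀ t x, M (t+1) x = if x < 0 then 0 else hf (conv (N t) ω x) := fun t x => rfl
  have hF0 : ∀ x, x < 0 → F x = 0 := by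
    intro x hx
    refine le_antisymm ((hFM 1 x).trans ?_) (hF1 x).1
    rw [hMs, if_pos hx]
  have hLm := aux_conv_mem F ω hω hF1
  have hKm := aux_conv_mem G ω hω hG1
  have hFs : ∀ x, 0 ≤ x → ∀ s, conv G ω x < s → s ≤ 1 → F x ≤ hf s := by
    intro x hx s h1 h2
    obtain ⟨t, ht⟩ := ((hKt x).eventually_lt_const h1).exists
    refine (hFM (t+1) x).trans ?_
    rw [hMs, if_neg (not_lt.2 hx)]
    exact hhf.1 (aux_conv_mem _ ω hω (hmaj t).2.2.2 x) ⟨(hKm x).1.trans h1.le, h2⟩ ht.le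
  have hGs : ∀ x s, conv F ω x < s → s ≤ 1 → G x ≤ hg s := by
    intro x s h1 h2
    obtain ⟨t, ht⟩ := ((hLt x).eventually_lt_const h1).exists
    refine (hGN t x).trans ?_
    exact hhg.1 (aux_conv_mem _ ω hω (hmaj t).2.1 x) ⟨(hLm x).1.trans h1.le, h2⟩ ht.le
  have hFge : ∀ x, 0 ≤ x → hf (conv G ω x) ≤ F x := by
    intro x hx
    refine ge_of_tendsto ((tendsto_add_atTop_iff_nat 1).2 (hFdef x)) (Eventually.of_forall fun t => ?_)
    rw [hMs, if_neg (not_lt.2 hx)]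
    exact hhf.1 (hKm x) (aux_conv_mem _ ω hω (hmaj t).2.2.2 x)
      (aux_conv_mono G _ ω hω (fun x => (hG1 x).1) (hGN t) (hmaj t).2.2.1.measurable
        (hmaj t).2.2.2 x)
  have hGge : ∀ x, hg (conv F ω x) ≤ G x := by
    intro x
    refine ge_of_tendsto (hGdef x) (Eventually.of_forall fun t => ?_)
    exact hhg.1 (hLm x) (aux_conv_mem _ ω hω (hmaj t).2.1 x)
      (aux_conv_mono F _ ω hω (fun x => (hF1 x).1) (hFM t) (hmaj t).1.measurable (hmaj t).2.1 x)
  have hFl := tendsto_atTop_ciSup hFm ⟨1, by rintro _ ⟨x, rfl⟩; exact (hF1 x).2⟩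
  have hGl := tendsto_atTop_ciSup hGm ⟨1, by rintro _ ⟨x, rfl⟩; exact (hG1 x).2⟩
  set φ := ⨆ i, F i
  set γ := ⨆ i, G i
  have hφ : φ ∈ Icc (0:ℝ) 1 := isClosed_Icc.mem_of_tendsto hFl (Eventually.of_forall hF1)
  have hγ : γ ∈ Icc (0:ℝ) 1 := isClosed_Icc.mem_of_tendsto hGl (Eventually.of_forall hG1)
  have fin : (∀ x, F x = 0) → ∀ x, Filter.Tendsto (fun t => f t x) Filter.atTop (nhds 0) := by
    intro h x
    have := hFdef x
    rw [h x] at this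
    exact squeeze_zero (fun t => ((hfM t).1 x).1) (fun t => (hfM t).2 x) this
  have main := aux_main F G ω hf hg hω hFm hGm hF1 hG1 hF0 φ γ hFl hGl hFs hGs
  constructor
  · intro hpos
    apply fin
    have h0 := main 0 (by
      intro x hx
      have := aux_prim_le hf (F x) 0 _ (hF1 x).1 (hKm x).1 (hFs x hx)
      rw [aux_prim_zero] at this
      linarith)
    have hz : φ = 0 := by
      by_contra hne
      have := hpos γ hγ φ hφ (fun h => hne h.2)
      linarith
    intro x
    exact le_antisymm (hz ▸ hFm.ge_of_tendsto hFl x) (hF1 x).1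
  · rintro ⟨hp, hP⟩
    apply fin
    have hF00 : F 0 = 0 := by
      by_contra hne
      have ha : 0 < F 0 := lt_of_le_of_ne (hF1 0).1 (Ne.symm hne)
      have hk : 0 < conv G ω 0 := by
        refine lt_of_le_of_ne (hKm 0).1 fun hk => ?_
        exact aux_rlim hf hg (F 0) ha hhg (hF1 0).2 (fun x hx => (hp x hx).2) hP
          (fun s h1 h2 => hFs 0 le_rfl s (hk ▸ h1) h2)
      set k := conv G ω 0 with hkdef
      have hk1 : k ≤ 1 := (hKm 0).2
      have hk2 : k / 2 ∈ Icc (0:ℝ) 1 := ⟨by linarith, by linarith⟩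
      have hb : 0 < min (hf (k/2)) (F 0) := lt_min (hp _ ⟨by linarith, hk2.2⟩).1 ha
      set b := min (hf (k/2)) (F 0)
      have h1 := aux_prim_le hf b 0 (k/2) hb.le hk2.1 (fun s h1 h2 =>
        (min_le_left _ _).trans (hhf.1 hk2 ⟨by linarith [hk2.1], h2⟩ h1.le))
      rw [aux_prim_zero] at h1
      have h0 := main (b * k / 2) (by
        intro x hx
        have hbx : b ≤ F x := (min_le_right _ _).trans (hFm hx)
        have h2 := aux_prim_le hf (F x) b _ hbx (hKm x).1 (hFs x hx)
        have h3 : k ≤ conv G ω x := aux_conv_monotone G ω hω hG1 hGm hx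
        nlinarith)
      have := hP γ hγ φ hφ
      nlinarith [mul_pos hb hk]
    obtain ⟨W, hW, hWp⟩ : ∃ W : ℝ, 0 < W ∧ ∀ x, |x| < W → 0 < ω x := by
      rcases hreg with h | ⟨W, h1, -, h2⟩
      · exact ⟨1, one_pos, fun x _ => h x⟩
      · exact ⟨W, h1, h2⟩
    have step : ∀ x, 0 ≤ x → F x = 0 → F (x + W / 2) = 0 := by
      intro x hx h
      have k0 : conv G ω x = 0 := by
        by_contra hne
        have := (hp _ ⟨lt_of_le_of_ne (hKm x).1 (Ne.symm hne), (hKm x).2⟩).1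
        linarith [hFge x hx]
      have g0 : G x = 0 := aux_zero G ω hω W hW hWp hGm hG1 x k0 x (by linarith)
      have l0 : conv F ω x = 0 := by
        by_contra hne
        have := (hp _ ⟨lt_of_le_of_ne (hLm x).1 (Ne.symm hne), (hLm x).2⟩).2
        linarith [hGge x]
      exact aux_zero F ω hω W hW hWp hFm hF1 x l0 _ (by linarith)
    have hn : ∀ n : ℕ, F (n * (W / 2)) = 0 := by
      intro n
      induction n with
      | zero => simpa using hF00
      | succ n ih =>
        have := step (n * (W/2)) (by positivity) ih
        rw [← this]; push_cast; ring_nf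
    intro x
    obtain ⟨n, hn'⟩ := exists_nat_ge (x / (W / 2))
    have : x ≤ n * (W / 2) := (div_le_iff₀ (by linarith)).1 hn'
    exact le_antisymm (hn n ▸ hFm this) (hF1 x).1
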